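/- For all graphs G and H each with at least n vertices such that G and H are 1-connected (i.e., connected with at least 2 vertices), the treewidth of G □ H is at least n − 1. In particular, the n × n planar grid (the cartesian product of two n-vertex paths) has treewidth at least n − 1. -/

import Mathlib

open SimpleGraph

/-- A tree decomposition of a graph `G`: a tree together with bags of vertices
indexed by the tree, covering all edges, such that for each vertex the set of
bags containing it induces a non-empty connected subtree. -/
structure TreeDecomposition {V : Type*} (G : SimpleGraph V) where
  ι : Type
  fintype_ι : Fintype ι
  tree : SimpleGraph ι
  isTree : tree.IsTree
  bag : ι → Finset V
  covers_edge : ∀ ⦃v w : V⦄, G.Adj v w → ∃ x : ι, v ∈ bag x ∧ w ∈ bag x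
  support_connected : ∀ v : V, (tree.induce {x : ι | v ∈ bag x}).Connected

/-- The width of a tree decomposition: maximum bag size minus one. -/
noncomputable def TreeDecomposition.width {V : Type*} {G : SimpleGraph V}
    (d : TreeDecomposition G) : ℕ :=
  letI := d.fintype_ι
  (Finset.univ.sup fun x : d.ι => (d.bag x).card) - 1

/-- The treewidth of a graph: minimum width of a tree decomposition. -/
noncomputable def treewidth {V : Type*} (G : SimpleGraph V) : ℕ :=
  sInf {w : ℕ | ∃ d : TreeDecomposition G, d.width = w}

/-- A graph is `k`-connected if it has more than `k` vertices and remains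
connected after deletion of any fewer than `k` vertices. -/
def IsKConnected {V : Type*} [Fintype V] (k : ℕ) (G : SimpleGraph V) : Prop :=
  k < Fintype.card V ∧
    ∀ S : Finset V, S.card < k → ((⊤ : G.Subgraph).deleteVerts ↑S).Connected

/-!
The crosses `({a} × V(H)) ∪ (V(G) × {b})` are connected in `G □ H`, and any two of them meet: they
form a bramble. In a tree decomposition, the indices of the bags meeting a fixed connected set of
vertices induce a subtree, and the subtrees arising from a bramble pairwise intersect. By the Helly
property of subtrees, some bag meets every cross: root the tree, and among the points where the
subtrees come nearest to the root take one furthest from it. A set which meets every cross projects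
onto `V(G)` or onto `V(H)`, so this bag has at least `n` elements.
-/

lemma isPath_append_of_forall_mem_support_eq {V : Type*} {G : SimpleGraph V} {u v w : V}
    {p : G.Walk u v} {q : G.Walk v w} (hp : p.IsPath) (hq : q.IsPath)
    (h : ∀ x ∈ p.support, x ∈ q.support → x = v) : (p.append q).IsPath := by
  rw [Walk.isPath_def, Walk.support_append]
  refine hp.support_nodup.append hq.support_nodup.tail fun x hxp hxq ↦ ?_
  obtain rfl := h x hxp (List.mem_of_mem_tail hxq)
  have hnodup := hq.support_nodup
  rw [← Walk.cons_tail_support] at hnodup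
  exact (List.nodup_cons.1 hnodup).1 hxq

lemma connected_induce_range {V W : Type*} {G : SimpleGraph V} {H : SimpleGraph W}
    (hG : G.Connected) (f : G →g H) : (H.induce (Set.range f)).Connected :=
  hG.map (⟨Set.rangeFactorization f, f.map_rel⟩ : G →g H.induce (Set.range f))
    Set.rangeFactorization_surjective

section SubtreesOfATree

variable {ι : Type*} {T : SimpleGraph ι} {S : Set ι}

lemma eq_of_isPath_of_isPath (hT : T.IsAcyclic) {u v : ι} {p q : T.Walk u v} (hp : p.IsPath)
    (hq : q.IsPath) : p = q :=
  congrArg Subtype.val ((hT.subsingleton_path u v).elim ⟨p, hp⟩ ⟨q, hq⟩)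

lemma length_eq_dist_of_isPath (hT : T.IsAcyclic) {u v : ι} {p : T.Walk u v} (hp : p.IsPath) :
    p.length = T.dist u v := by
  obtain ⟨q, hq, hq_length⟩ := p.reachable.exists_path_of_dist
  rw [← hq_length, eq_of_isPath_of_isPath hT hp hq]

lemma support_subset_of_preconnected_induce (hT : T.IsAcyclic) (hS : (T.induce S).Preconnected)
    {u v : ι} (hu : u ∈ S) (hv : v ∈ S) {p : T.Walk u v} (hp : p.IsPath) :
    ∀ w ∈ p.support, w ∈ S := by
  obtain ⟨q, hq⟩ := hS.exists_isPath ⟨u, hu⟩ ⟨v, hv⟩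
  let f : T.induce S ↪g T := Embedding.induce S
  obtain rfl : p = q.map f.toHom := eq_of_isPath_of_isPath hT hp (hq.map f.injective)
  intro w hw
  obtain ⟨x, -, rfl⟩ := List.mem_map.1 (Walk.support_map f.toHom q ▸ hw)
  exact x.2

lemma mem_support_of_minimalFor_dist (hT : T.IsTree) (hS : (T.induce S).Preconnected) {r t z : ι}
    (ht : MinimalFor (· ∈ S) (T.dist r) t) (hz : z ∈ S) {p : T.Walk r z} (hp : p.IsPath) :
    t ∈ p.support := by
  classical
  obtain ⟨q, hq, hq_length⟩ := hT.connected.exists_path_of_dist r t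
  obtain ⟨s, hs⟩ := hT.connected.exists_isPath t z
  have hqS : ∀ v ∈ q.support, v ∈ S → v = t := by
    intro v hvq hvS
    by_contra hvt
    refine ht.not_lt hvS ?_
    calc
      T.dist r v ≤ (q.takeUntil v hvq).length := dist_le _
      _ < q.length := Walk.length_takeUntil_lt_length hvq hvt
      _ = T.dist r t := hq_length
  have hqs : (q.append s).IsPath := isPath_append_of_forall_mem_support_eq hq hs fun v hvq hvs ↦
    hqS v hvq (support_subset_of_preconnected_induce hT.isAcyclic hS ht.prop hz hs v hvs)
  rw [eq_of_isPath_of_isPath hT.isAcyclic hp hqs, Walk.mem_support_append_iff]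
  exact .inl q.end_mem_support

lemma mem_of_minimalFor_dist_of_dist_le (hT : T.IsTree) {S' : Set ι}
    (hS : (T.induce S).Preconnected) (hS' : (T.induce S').Preconnected)
    (h_inter : (S ∩ S').Nonempty) {r t t' : ι} (ht : MinimalFor (· ∈ S) (T.dist r) t)
    (ht' : MinimalFor (· ∈ S') (T.dist r) t') (hle : T.dist r t' ≤ T.dist r t) : t ∈ S' := by
  classical
  obtain ⟨z, hz, hz'⟩ := h_inter
  obtain ⟨p, hp⟩ := hT.connected.exists_isPath r z
  have htp : t ∈ p.support := mem_support_of_minimalFor_dist hT hS ht hz hp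
  have htp' : t' ∈ p.support := mem_support_of_minimalFor_dist hT hS' ht' hz' hp
  rw [← p.take_spec htp', Walk.mem_support_append_iff] at htp
  rcases htp with h_before | h_after
  · suffices t = t' from this ▸ ht'.prop
    by_contra hne
    have hlt : T.dist r t < T.dist r t' := calc
      T.dist r t ≤ ((p.takeUntil t' htp').takeUntil t h_before).length := dist_le _
      _ < (p.takeUntil t' htp').length := Walk.length_takeUntil_lt_length h_before hne
      _ = T.dist r t' := length_eq_dist_of_isPath hT.isAcyclic (hp.takeUntil htp')
    exact hlt.not_ge hle
  · exact support_subset_of_preconnected_induce hT.isAcyclic hS' ht'.prop hz' (hp.dropUntil htp')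
      t h_after

theorem helly_theorem_of_isTree (hT : T.IsTree) {𝒮 : Set (Set ι)} (h_fin : 𝒮.Finite)
    (h_conn : ∀ S ∈ 𝒮, (T.induce S).Connected)
    (h_inter : ∀ S ∈ 𝒮, ∀ S' ∈ 𝒮, (S ∩ S').Nonempty) : (⋂₀ 𝒮).Nonempty := by
  obtain ⟨r⟩ := hT.connected.nonempty
  obtain rfl | h_ne := 𝒮.eq_empty_or_nonempty
  · exact ⟨r, by simp⟩
  have h_nearest (S) (hS : S ∈ 𝒮) : ∃ t, MinimalFor (· ∈ S) (T.dist r) t :=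
    exists_minimalFor_of_wellFoundedLT _ _ (Set.nonempty_coe_sort.1 (h_conn S hS).nonempty)
  have : Nonempty ι := ⟨r⟩
  choose! t ht using h_nearest
  obtain ⟨S, hS, hmax⟩ := Set.exists_max_image 𝒮 (fun S ↦ T.dist r (t S)) h_fin h_ne
  exact ⟨t S, fun S' hS' ↦ mem_of_minimalFor_dist_of_dist_le hT (h_conn S hS).preconnected
    (h_conn S' hS').preconnected (h_inter S hS S' hS') (ht S hS) (ht S' hS') (hmax S' hS')⟩

end SubtreesOfATree

namespace TreeDecomposition

variable {V : Type*} {G : SimpleGraph V}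

/-- The indices of the bags meeting `C`: the trace which `C` leaves on the decomposition tree. -/
def trace (D : TreeDecomposition G) (C : Set V) : Set D.ι :=
  {x | ∃ v ∈ C, v ∈ D.bag x}

lemma exists_mem_bag (D : TreeDecomposition G) (v : V) : ∃ x, v ∈ D.bag x :=
  let ⟨⟨x, hx⟩⟩ := (D.support_connected v).nonempty
  ⟨x, hx⟩

lemma reachable_induce_trace_of_mem_bag (D : TreeDecomposition G) {C : Set V} {v : V} (hv : v ∈ C)
    {x y : D.ι} (hx : v ∈ D.bag x) (hy : v ∈ D.bag y) :
    (D.tree.induce (D.trace C)).Reachable ⟨x, v, hv, hx⟩ ⟨y, v, hv, hy⟩ :=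
  have h_subset : {x | v ∈ D.bag x} ⊆ D.trace C := fun _ h ↦ ⟨v, hv, h⟩
  ((D.support_connected v).preconnected ⟨x, hx⟩ ⟨y, hy⟩).map
    (induceHomOfLE D.tree h_subset).toHom

lemma reachable_induce_trace_of_walk (D : TreeDecomposition G) {C : Set V} {u v : C}
    (p : (G.induce C).Walk u v) {x y : D.ι} (hx : u.1 ∈ D.bag x) (hy : v.1 ∈ D.bag y) :
    (D.tree.induce (D.trace C)).Reachable ⟨x, u, u.2, hx⟩ ⟨y, v, v.2, hy⟩ := by
  induction p generalizing x with
  | nil => exact D.reachable_induce_trace_of_mem_bag (Subtype.prop _) hx hy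
  | @cons u w _ h_adj _ ih =>
    obtain ⟨z, hzu, hzw⟩ := D.covers_edge h_adj
    exact (D.reachable_induce_trace_of_mem_bag u.2 hx hzu).trans (ih hzw hy)

lemma connected_induce_trace (D : TreeDecomposition G) {C : Set V} (hC : (G.induce C).Connected) :
    (D.tree.induce (D.trace C)).Connected := by
  refine connected_iff _ |>.2 ⟨?_, ?_⟩
  · rintro ⟨x, u, hu, hx⟩ ⟨y, v, hv, hy⟩
    obtain ⟨p⟩ := hC.preconnected ⟨u, hu⟩ ⟨v, hv⟩
    exact D.reachable_induce_trace_of_walk p hx hy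
  · obtain ⟨v, hv⟩ := hC.nonempty
    obtain ⟨x, hx⟩ := D.exists_mem_bag v
    exact ⟨x, v, hv, hx⟩

lemma card_bag_le_width_add_one (D : TreeDecomposition G) (x : D.ι) :
    (D.bag x).card ≤ D.width + 1 := by
  let _ := D.fintype_ι
  have h_le_sup := Finset.le_sup (f := fun x : D.ι ↦ (D.bag x).card) (Finset.mem_univ x)
  exact h_le_sup.trans le_tsub_add

/-- The tree decomposition with a single bag, which witnesses that the treewidth of a finite graph
is an infimum over a nonempty set. -/
def singleBag [Fintype V] (G : SimpleGraph V) : TreeDecomposition G where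
  ι := Unit
  fintype_ι := inferInstance
  tree := ⊥
  isTree := IsTree.of_subsingleton
  bag _ := Finset.univ
  covers_edge _ _ _ := ⟨(), Finset.mem_univ _, Finset.mem_univ _⟩
  support_connected v := by
    have : Nonempty {x : Unit | v ∈ Finset.univ} := ⟨⟨(), Finset.mem_univ v⟩⟩
    exact Connected.of_subsingleton

end TreeDecomposition

lemma exists_treeDecomposition_width_eq_treewidth {V : Type*} [Finite V] (G : SimpleGraph V) :
    ∃ D : TreeDecomposition G, D.width = treewidth G :=
  have := Fintype.ofFinite V
  Nat.sInf_mem (s := {w | ∃ D : TreeDecomposition G, D.width = w})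
    ⟨_, TreeDecomposition.singleBag G, rfl⟩

/-- A bramble: a family of connected sets of vertices which pairwise touch, that is, share a vertex
or are joined by an edge. -/
structure IsBramble {V : Type*} (G : SimpleGraph V) (B : Set (Set V)) : Prop where
  connected : ∀ s ∈ B, (G.induce s).Connected
  touch : ∀ s ∈ B, ∀ t ∈ B, ∃ u ∈ s, ∃ v ∈ t, u = v ∨ G.Adj u v

namespace IsBramble

variable {V : Type*} {G : SimpleGraph V} {B : Set (Set V)}

lemma nonempty_trace_inter_trace (hB : IsBramble G B) (D : TreeDecomposition G) {s t : Set V}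
    (hs : s ∈ B) (ht : t ∈ B) : (D.trace s ∩ D.trace t).Nonempty := by
  obtain ⟨u, hu, v, hv, rfl | h_adj⟩ := hB.touch s hs t ht
  · obtain ⟨x, hx⟩ := D.exists_mem_bag u
    exact ⟨x, ⟨u, hu, hx⟩, ⟨u, hv, hx⟩⟩
  · obtain ⟨x, hxu, hxv⟩ := D.covers_edge h_adj
    exact ⟨x, ⟨u, hu, hxu⟩, ⟨v, hv, hxv⟩⟩

theorem exists_bag_meets (hB : IsBramble G B) (D : TreeDecomposition G) :
    ∃ x, ∀ s ∈ B, ∃ v ∈ s, v ∈ D.bag x := by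
  have := D.fintype_ι
  obtain ⟨x, hx⟩ := helly_theorem_of_isTree D.isTree (𝒮 := D.trace '' B)
    (Set.toFinite _)
    (by rintro _ ⟨s, hs, rfl⟩; exact D.connected_induce_trace (hB.connected s hs))
    (by rintro _ ⟨s, hs, rfl⟩ _ ⟨t, ht, rfl⟩; exact hB.nonempty_trace_inter_trace D hs ht)
  exact ⟨x, fun s hs ↦ hx _ ⟨s, hs, rfl⟩⟩

theorem le_treewidth_add_one [Finite V] (hB : IsBramble G B) {k : ℕ}
    (hk : ∀ X : Finset V, (∀ s ∈ B, ∃ v ∈ s, v ∈ X) → k ≤ X.card) : k ≤ treewidth G + 1 := by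
  obtain ⟨D, hD⟩ := exists_treeDecomposition_width_eq_treewidth G
  obtain ⟨x, hx⟩ := hB.exists_bag_meets D
  exact hD ▸ (hk _ hx).trans (D.card_bag_le_width_add_one x)

end IsBramble

section Cross

variable {α β : Type*}

/-- The cross with centre `(a, b)`: the union of the two fibres of `α × β` through this point. -/
def cross (a : α) (b : β) : Set (α × β) :=
  {p | p.1 = a ∨ p.2 = b}

lemma cross_eq_range_union_range (G : SimpleGraph α) (H : SimpleGraph β) (a : α) (b : β) :
    cross a b = Set.range (G.boxProdLeft H b) ∪ Set.range (G.boxProdRight H a) := by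
  ext ⟨x, y⟩
  simp [cross, eq_comm, or_comm]

lemma connected_induce_cross {G : SimpleGraph α} {H : SimpleGraph β} (hG : G.Connected)
    (hH : H.Connected) (a : α) (b : β) : ((G □ H).induce (cross a b)).Connected := by
  rw [cross_eq_range_union_range G H]
  exact induce_union_connected
    (connected_induce_range hG (G.boxProdLeft H b).toHom).preconnected
    (connected_induce_range hH (G.boxProdRight H a).toHom).preconnected
    ⟨(a, b), ⟨a, rfl⟩, ⟨b, rfl⟩⟩

lemma isBramble_range_cross {G : SimpleGraph α} {H : SimpleGraph β} (hG : G.Connected)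
    (hH : H.Connected) : IsBramble (G □ H) (Set.range fun p : α × β ↦ cross p.1 p.2) where
  connected := by
    rintro _ ⟨⟨a, b⟩, rfl⟩
    exact connected_induce_cross hG hH a b
  touch := by
    rintro _ ⟨⟨a, b⟩, rfl⟩ _ ⟨⟨a', b'⟩, rfl⟩
    exact ⟨(a, b'), .inl rfl, (a, b'), .inr rfl, .inl rfl⟩

lemma min_card_le_card_of_forall_meets_cross [Fintype α] [Fintype β] {X : Finset (α × β)}
    (hX : ∀ a b, ∃ p ∈ cross a b, p ∈ X) : min (Fintype.card α) (Fintype.card β) ≤ X.card := by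
  classical
  have h_proj : X.image Prod.fst = Finset.univ ∨ X.image Prod.snd = Finset.univ := by
    simp_rw [Finset.eq_univ_iff_forall]
    by_contra! ⟨⟨a, ha⟩, ⟨b, hb⟩⟩
    obtain ⟨p, rfl | rfl, hp⟩ := hX a b
    exacts [ha (Finset.mem_image_of_mem _ hp), hb (Finset.mem_image_of_mem _ hp)]
  obtain h_fst | h_snd := h_proj
  · exact min_le_of_left_le (by rw [← Finset.card_univ, ← h_fst]; exact Finset.card_image_le)
  · exact min_le_of_right_le (by rw [← Finset.card_univ, ← h_snd]; exact Finset.card_image_le)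

end Cross

theorem min_card_le_treewidth_boxProd_add_one {α β : Type*} [Fintype α] [Fintype β]
    {G : SimpleGraph α} {H : SimpleGraph β} (hG : G.Connected) (hH : H.Connected) :
    min (Fintype.card α) (Fintype.card β) ≤ treewidth (G □ H) + 1 :=
  (isBramble_range_cross hG hH).le_treewidth_add_one fun _ hX ↦
    min_card_le_card_of_forall_meets_cross fun a b ↦ hX _ ⟨(a, b), rfl⟩

lemma IsKConnected.connected {V : Type*} [Fintype V] {k : ℕ} {G : SimpleGraph V}
    (hG : IsKConnected k G) (hk : 0 < k) : G.Connected := by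
  have h_top := hG.2 ∅ (by simpa using hk)
  rw [Finset.coe_empty, Subgraph.deleteVerts_empty] at h_top
  exact Subgraph.topIso.connected_iff.1 h_top.coe

/-- For all `1`-connected graphs `G` and `H` (i.e. connected graphs with at least
two vertices) each with at least `n` vertices, the treewidth of `G □ H` is at
least `n - 1`. In particular, the `n × n` planar grid (the cartesian product of
two `n`-vertex paths) has treewidth at least `n - 1`. -/
theorem treewidth_boxProd_connected_ge (n : ℕ) :
    (∀ (α β : Type) [Fintype α] [Fintype β] (G : SimpleGraph α) (H : SimpleGraph β),
      IsKConnected 1 G → IsKConnected 1 H →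
      n ≤ Fintype.card α → n ≤ Fintype.card β →
      n - 1 ≤ treewidth (G □ H)) ∧
    n - 1 ≤ treewidth (pathGraph n □ pathGraph n) := by
  constructor
  · intro α β _ _ G H hG hH hα hβ
    have h_min := min_card_le_treewidth_boxProd_add_one (hG.connected one_pos)
      (hH.connected one_pos)
    exact Nat.sub_le_of_le_add ((le_min hα hβ).trans h_min)
  · obtain _ | m := n
    · exact Nat.zero_le _
    · simpa using
        min_card_le_treewidth_boxProd_add_one (pathGraph_connected m) (pathGraph_connected m)
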